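/- Let a(t) be a C¹ real function on ℝ with no zeros. Then every maximal solution of the second-order ODE r'' + (b²/4) r = a(t)²/r³ with initial condition r(t₀) = r₀ > 0, r'(t₀) = r₁ is defined on all of ℝ (and stays positive). -/

import Mathlib

open Set Filter Topology

/-- The right-hand side of the radial equation `r'' = a² / r³ - b² / 4 * r`, where `α = a²`. -/
noncomputable def radialForce (b α r : ℝ) : ℝ := α / r ^ 3 - b ^ 2 / 4 * r

lemma radialForce_strictAntiOn {b α : ℝ} (hb : 0 < b) (hα : 0 < α) :
    StrictAntiOn (radialForce b α) (Ioi 0) := by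
  intro x hx y _ hxy
  have hx : 0 < x := hx
  unfold radialForce
  gcongr

lemma continuous_radialForce_left {a : ℝ → ℝ} (ha : Continuous a) (b r : ℝ) :
    Continuous fun t => radialForce b (a t ^ 2) r := by
  unfold radialForce
  fun_prop

/-- The mean value theorem in sequential form: the derivative at `u` is a limit of values of the
derivative at points converging to `u` from a prescribed side. -/
lemma exists_tendsto_deriv_of_hasDerivAt {g g' : ℝ → ℝ} (hg : ∀ t, HasDerivAt g (g' t) t) (u : ℝ) :
    ∃ ξ : ℝ → ℝ, (∀ s, u < s → ξ s ∈ Ioo u s) ∧ (∀ s, s < u → ξ s ∈ Ioo s u) ∧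
      Tendsto ξ (𝓝[≠] u) (𝓝 u) ∧ Tendsto (fun s => g' (ξ s)) (𝓝[≠] u) (𝓝 (g' u)) := by
  have hc : Continuous g := continuous_iff_continuousAt.2 fun t => (hg t).continuousAt
  have key : ∀ s, ∃ z, (u < s → z ∈ Ioo u s) ∧ (s < u → z ∈ Ioo s u) ∧
      (s ≠ u → g' z = slope g u s) := by
    intro s
    rcases lt_trichotomy u s with h | h | h
    · obtain ⟨z, hz, hz'⟩ :=
        exists_hasDerivAt_eq_slope g g' h hc.continuousOn fun x _ => hg x
      exact ⟨z, fun _ => hz, fun h' => absurd h' h.not_gt, fun _ => by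
        rw [hz', slope_def_field]⟩
    · exact ⟨u, fun h' => absurd h h'.ne, fun h' => absurd h.symm h'.ne,
        fun h' => absurd h.symm h'⟩
    · obtain ⟨z, hz, hz'⟩ :=
        exists_hasDerivAt_eq_slope g g' h hc.continuousOn fun x _ => hg x
      exact ⟨z, fun h' => absurd h' h.not_gt, fun _ => hz, fun _ => by
        rw [hz', slope_comm, slope_def_field]⟩
  choose ξ h1 h2 h3 using key
  refine ⟨ξ, h1, h2, ?_, ?_⟩
  · have hid : Tendsto (fun s : ℝ => |s - u|) (𝓝[≠] u) (𝓝 0) := by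
      have : Continuous fun s : ℝ => |s - u| := by fun_prop
      simpa using (this.tendsto u).mono_left nhdsWithin_le_nhds
    refine tendsto_iff_dist_tendsto_zero.2
      (squeeze_zero' (Eventually.of_forall fun _ => dist_nonneg) ?_ hid)
    filter_upwards [self_mem_nhdsWithin] with s hs
    rw [Real.dist_eq]
    rcases lt_or_gt_of_ne hs with h | h
    · have := h2 s h
      rw [abs_of_neg (by linarith [this.2]), abs_of_neg (by linarith)]
      linarith [this.1]
    · have := h1 s h
      rw [abs_of_pos (by linarith [this.1]), abs_of_pos (by linarith)]
      linarith [this.2]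
  · refine (hasDerivAt_iff_tendsto_slope.1 (hg u)).congr' ?_
    filter_upwards [self_mem_nhdsWithin] with s hs
    exact (h3 s hs).symm

section Regularity

variable {a ρ g : ℝ → ℝ} {b : ℝ}

/-- If `radialForce` along `ρ` is a derivative, then `ρ` has no jumps: `ρ u` is a limit of values
of `ρ` at points converging to `u` from a prescribed side. -/
lemma exists_tendsto_of_hasDerivAt_radialForce (ha : Continuous a) (ha0 : ∀ t, a t ≠ 0)
    (hb : 0 < b) (hρ : ∀ t, 0 < ρ t)
    (hg : ∀ t, HasDerivAt g (radialForce b (a t ^ 2) (ρ t)) t) (u : ℝ) :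
    ∃ ξ : ℝ → ℝ, (∀ s, u < s → ξ s ∈ Ioo u s) ∧ (∀ s, s < u → ξ s ∈ Ioo s u) ∧
      Tendsto ξ (𝓝[≠] u) (𝓝 u) ∧ Tendsto (fun s => ρ (ξ s)) (𝓝[≠] u) (𝓝 (ρ u)) := by
  obtain ⟨ξ, h1, h2, h3, h4⟩ := exists_tendsto_deriv_of_hasDerivAt hg u
  refine ⟨ξ, h1, h2, h3, ?_⟩
  have anti : ∀ t, StrictAntiOn (radialForce b (a t ^ 2)) (Ioi 0) := fun t =>
    radialForce_strictAntiOn hb (by have := ha0 t; positivity)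
  have lim : ∀ y, Tendsto (fun s => radialForce b (a (ξ s) ^ 2) y) (𝓝[≠] u)
      (𝓝 (radialForce b (a u ^ 2) y)) := fun y =>
    ((continuous_radialForce_left ha b y).tendsto u).comp h3
  refine tendsto_order.2 ⟨fun y hy => ?_, fun y hy => ?_⟩
  · rcases le_or_gt y 0 with hy0 | hy0
    · exact Eventually.of_forall fun s => hy0.trans_lt (hρ _)
    filter_upwards [h4.eventually_lt (lim y) (anti u hy0 (hρ u) hy)] with s hs
    exact ((anti (ξ s)).lt_iff_gt (hρ _) hy0).1 hs
  · have hy0 : 0 < y := (hρ u).trans hy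
    filter_upwards [(lim y).eventually_lt h4 (anti u (hρ u) hy0 hy)] with s hs
    exact ((anti (ξ s)).lt_iff_gt hy0 (hρ _)).1 hs

/-- A mean value inequality on closed intervals not presupposing continuity at the endpoints. -/
lemma abs_sub_sub_le_of_hasDerivAt_radialForce (ha : Continuous a) (ha0 : ∀ t, a t ≠ 0)
    (hb : 0 < b) (hρ : ∀ t, 0 < ρ t)
    (hg : ∀ t, HasDerivAt g (radialForce b (a t ^ 2) (ρ t)) t) {x y c L : ℝ} (hxy : x ≤ y)
    (hd : ∀ t ∈ Ioo x y, HasDerivAt ρ (g t) t) (hL : ∀ t ∈ Ioo x y, |g t - c| ≤ L) :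
    |ρ y - ρ x - c * (y - x)| ≤ L * (y - x) := by
  rcases hxy.eq_or_lt with rfl | hxy
  · simp
  obtain ⟨ξ, hξ, -, hξ₁, hξ₂⟩ := exists_tendsto_of_hasDerivAt_radialForce ha ha0 hb hρ hg x
  obtain ⟨η, -, hη, hη₁, hη₂⟩ := exists_tendsto_of_hasDerivAt_radialForce ha ha0 hb hρ hg y
  have hl : 𝓝[>] x ≤ 𝓝[≠] x := nhdsWithin_mono _ fun _ h => ne_of_gt h
  have hr : 𝓝[<] y ≤ 𝓝[≠] y := nhdsWithin_mono _ fun _ h => ne_of_lt h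
  have tξ : Tendsto (fun q : ℝ × ℝ => ξ q.1) (𝓝[>] x ×ˢ 𝓝[<] y) (𝓝 x) :=
    (hξ₁.mono_left hl).comp tendsto_fst
  have tη : Tendsto (fun q : ℝ × ℝ => η q.2) (𝓝[>] x ×ˢ 𝓝[<] y) (𝓝 y) :=
    (hη₁.mono_left hr).comp tendsto_snd
  have tρξ : Tendsto (fun q : ℝ × ℝ => ρ (ξ q.1)) (𝓝[>] x ×ˢ 𝓝[<] y) (𝓝 (ρ x)) :=
    (hξ₂.mono_left hl).comp tendsto_fst
  have tρη : Tendsto (fun q : ℝ × ℝ => ρ (η q.2)) (𝓝[>] x ×ˢ 𝓝[<] y) (𝓝 (ρ y)) :=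
    (hη₂.mono_left hr).comp tendsto_snd
  refine le_of_tendsto_of_tendsto (((tρη.sub tρξ).sub ((tη.sub tξ).const_mul c)).abs)
    ((tη.sub tξ).const_mul L) ?_
  obtain ⟨z, hxz, hzy⟩ := exists_between hxy
  filter_upwards [prod_mem_prod (Ioo_mem_nhdsGT hxz) (Ioo_mem_nhdsLT hzy)] with q hq
  have h₁ := hξ q.1 hq.1.1
  have h₂ := hη q.2 hq.2.2
  have h₃ := hq.1.2
  have h₄ := hq.2.1
  have hle : ξ q.1 ≤ η q.2 := by linarith [h₁.2, h₂.1]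
  have hsub : Icc (ξ q.1) (η q.2) ⊆ Ioo x y := fun t ht =>
    ⟨h₁.1.trans_le ht.1, ht.2.trans_lt h₂.2⟩
  have := (convex_Icc (ξ q.1) (η q.2)).norm_image_sub_le_of_norm_hasDerivWithin_le
    (f := fun t => ρ t - c * t) (f' := fun t => g t - c) (C := L)
    (fun t ht => by
      simpa using! ((hd t (hsub ht)).sub ((hasDerivAt_id t).const_mul c)).hasDerivWithinAt)
    (fun t ht => hL t (hsub ht)) (left_mem_Icc.2 hle) (right_mem_Icc.2 hle)
  rw [Real.norm_eq_abs, Real.norm_of_nonneg (sub_nonneg.2 hle)] at this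
  have e : ρ (η q.2) - ρ (ξ q.1) - c * (η q.2 - ξ q.1) =
      ρ (η q.2) - c * η q.2 - (ρ (ξ q.1) - c * ξ q.1) := by ring
  rwa [e]

/-- Isolated points of non-differentiability of `ρ` are removable. -/
lemma hasDerivAt_of_eventually_hasDerivAt_radialForce (ha : Continuous a) (ha0 : ∀ t, a t ≠ 0)
    (hb : 0 < b) (hρ : ∀ t, 0 < ρ t)
    (hg : ∀ t, HasDerivAt g (radialForce b (a t ^ 2) (ρ t)) t) {t : ℝ}
    (hd : ∀ᶠ s in 𝓝[≠] t, HasDerivAt ρ (g s) s) : HasDerivAt ρ (g t) t := by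
  rw [hasDerivAt_iff_isLittleO, Asymptotics.isLittleO_iff]
  intro ε hε
  have hc : ∀ᶠ s in 𝓝[≠] t, |g s - g t| ≤ ε := by
    have := (hg t).continuousAt.tendsto.sub_const (g t) |>.abs
    rw [sub_self, abs_zero] at this
    exact ((this.eventually_lt_const hε).mono fun s => le_of_lt).filter_mono nhdsWithin_le_nhds
  have h := hd.and hc
  rw [eventually_nhdsWithin_iff, Metric.eventually_nhds_iff] at h
  obtain ⟨δ, hδ, h⟩ := h
  refine Metric.eventually_nhds_iff.2 ⟨δ, hδ, fun s hs => ?_⟩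
  simp only [Real.dist_eq, abs_lt, smul_eq_mul, Real.norm_eq_abs] at h hs ⊢
  rcases le_total t s with hts | hts
  · have := abs_sub_sub_le_of_hasDerivAt_radialForce ha ha0 hb hρ hg (c := g t) (L := ε) hts
      (fun z hz => (h (y := z) ⟨by linarith [hz.1], by linarith [hz.2]⟩ hz.1.ne').1)
      (fun z hz => (h (y := z) ⟨by linarith [hz.1], by linarith [hz.2]⟩ hz.1.ne').2)
    rwa [abs_of_nonneg (sub_nonneg.2 hts), mul_comm (s - t)]
  · have := abs_sub_sub_le_of_hasDerivAt_radialForce ha ha0 hb hρ hg (c := g t) (L := ε) hts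
      (fun z hz => (h (y := z) ⟨by linarith [hz.1], by linarith [hz.2]⟩ hz.2.ne).1)
      (fun z hz => (h (y := z) ⟨by linarith [hz.1], by linarith [hz.2]⟩ hz.2.ne).2)
    rw [abs_of_nonpos (sub_nonpos.2 hts), ← abs_neg]
    convert this using 1
    · congr 1; ring
    · ring

/-- The only positive zero of `radialForce b α` is `(4 α / b²) ^ (1 / 4)`. -/
lemma eq_sqrt_of_radialForce_eq_zero {α r : ℝ} (hb : 0 < b) (hr : 0 < r)
    (h : radialForce b α r = 0) : r = √(√(4 / b ^ 2 * α)) := by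
  have : 4 / b ^ 2 * α = (r ^ 2) ^ 2 := by
    unfold radialForce at h
    field_simp at h ⊢
    linarith
  rw [this, Real.sqrt_sq (by positivity), Real.sqrt_sq hr.le]

/-- Off the common zeros of `deriv ρ` and its derivative, `ρ` is differentiable. -/
lemma eventually_hasDerivAt_of_radialForce (ha : Continuous a) (ha0 : ∀ t, a t ≠ 0)
    (hb : 0 < b) (hρ : ∀ t, 0 < ρ t)
    (hg : ∀ t, HasDerivAt (deriv ρ) (radialForce b (a t ^ 2) (ρ t)) t) {t : ℝ}
    (ht : ¬ (deriv ρ t = 0 ∧ radialForce b (a t ^ 2) (ρ t) = 0)) :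
    HasDerivAt ρ (deriv ρ t) t ∧
      ∀ᶠ s in 𝓝 t, ¬ (deriv ρ s = 0 ∧ radialForce b (a s ^ 2) (ρ s) = 0) := by
  by_cases h0 : deriv ρ t = 0
  · have hF : radialForce b (a t ^ 2) (ρ t) ≠ 0 := fun h => ht ⟨h0, h⟩
    have hne : ∀ᶠ s in 𝓝[≠] t, deriv ρ s ≠ 0 := (hg t).eventually_ne hF
    refine ⟨hasDerivAt_of_eventually_hasDerivAt_radialForce ha ha0 hb hρ hg
      (hne.mono fun s hs => (differentiableAt_of_deriv_ne_zero hs).hasDerivAt), ?_⟩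
    rw [eventually_nhdsWithin_iff] at hne
    filter_upwards [hne] with s hs h
    rcases eq_or_ne s t with rfl | hst
    · exact hF h.2
    · exact hs hst h.1
  · refine ⟨(differentiableAt_of_deriv_ne_zero h0).hasDerivAt, ?_⟩
    filter_upwards [(hg t).continuousAt.eventually_ne h0] with s hs h using hs h.1

lemma exists_lipschitzOnWith_of_radialForce (ha : ContDiff ℝ 1 a) (ha0 : ∀ t, a t ≠ 0)
    (hb : 0 < b) (hρ : ∀ t, 0 < ρ t)
    (hg : ∀ t, HasDerivAt (deriv ρ) (radialForce b (a t ^ 2) (ρ t)) t) (M N : ℝ) :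
    ∃ L, LipschitzOnWith L ρ (Icc M N) := by
  set K : Set ℝ := {t | deriv ρ t = 0 ∧ radialForce b (a t ^ 2) (ρ t) = 0}
  have hKc : IsClosed K := by
    rw [← isOpen_compl_iff, isOpen_iff_eventually]
    exact fun t ht => (eventually_hasDerivAt_of_radialForce ha.continuous ha0 hb hρ hg ht).2
  set c : ℝ → ℝ := fun t => √(√(4 / b ^ 2 * a t ^ 2))
  have hcd : ContDiff ℝ 1 c := by
    have h1 : ∀ t, 4 / b ^ 2 * a t ^ 2 ≠ 0 := fun t => by have := ha0 t; positivity
    have h2 : ∀ t, √(4 / b ^ 2 * a t ^ 2) ≠ 0 := fun t => by have := ha0 t; positivity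
    exact (ContDiff.sqrt (contDiff_const.mul (ha.pow 2)) h1).sqrt h2
  have hKρ : ∀ t ∈ K, ρ t = c t := fun t ht => eq_sqrt_of_radialForce_eq_zero hb (hρ t) ht.2
  have hgc : Continuous (deriv ρ) := continuous_iff_continuousAt.2 fun t => (hg t).continuousAt
  obtain ⟨L₁, hL₁⟩ := isCompact_Icc.exists_bound_of_continuousOn (s := Icc M N) hgc.continuousOn
  obtain ⟨L₂, hL₂⟩ := isCompact_Icc.exists_bound_of_continuousOn (s := Icc M N)
    (hcd.continuous_deriv le_rfl).continuousOn
  set L := max (max L₁ L₂) 0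
  have hL : 0 ≤ L := le_max_right _ _
  have gap : ∀ x y, M ≤ x → x ≤ y → y ≤ N → (∀ t ∈ Ioo x y, t ∉ K) →
      |ρ y - ρ x| ≤ L * (y - x) := by
    intro x y hMx hxy hyN h
    have := abs_sub_sub_le_of_hasDerivAt_radialForce ha.continuous ha0 hb hρ hg (c := 0)
      (L := L) hxy
      (fun t ht => (eventually_hasDerivAt_of_radialForce ha.continuous ha0 hb hρ hg (h t ht)).1)
      (fun t ht => by
        rw [sub_zero]
        exact (hL₁ t ⟨by linarith [ht.1], by linarith [ht.2]⟩).trans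
          ((le_max_left _ _).trans (le_max_left _ _)))
    simpa using this
  have lip : ∀ x y, M ≤ x → x ≤ y → y ≤ N → |ρ y - ρ x| ≤ L * (y - x) := by
    intro x y hMx hxy hyN
    by_cases hne : (Icc x y ∩ K).Nonempty
    · have hcp : IsCompact (Icc x y ∩ K) := isCompact_Icc.inter_right hKc
      obtain ⟨u, hu⟩ := hcp.exists_isLeast hne
      obtain ⟨v, hv⟩ := hcp.exists_isGreatest hne
      have huv : u ≤ v := hu.2 hv.1
      obtain ⟨⟨⟨hxu, huy⟩, huK⟩, hu'⟩ := hu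
      obtain ⟨⟨⟨hxv, hvy⟩, hvK⟩, hv'⟩ := hv
      have e1 := gap x u hMx hxu (by linarith) fun t ht htK =>
        absurd (hu' ⟨⟨ht.1.le, by linarith [ht.2]⟩, htK⟩) ht.2.not_ge
      have e2 := gap v y (by linarith) hvy hyN fun t ht htK =>
        absurd (hv' ⟨⟨by linarith [ht.1], ht.2.le⟩, htK⟩) ht.1.not_ge
      have e3 := (convex_Icc M N).norm_image_sub_le_of_norm_deriv_le (f := c) (C := L) (x := u)
        (y := v) (fun t _ => hcd.differentiable one_ne_zero t)
        (fun t ht => (hL₂ t ht).trans ((le_max_right _ _).trans (le_max_left _ _)))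
        ⟨by linarith, by linarith⟩ ⟨by linarith, by linarith⟩
      rw [← hKρ u huK, ← hKρ v hvK, Real.norm_eq_abs, Real.norm_of_nonneg (by linarith)] at e3
      have : ρ y - ρ x = (ρ y - ρ v) + (ρ v - ρ u) + (ρ u - ρ x) := by ring
      rw [this]
      calc _ ≤ |ρ y - ρ v| + |ρ v - ρ u| + |ρ u - ρ x| := abs_add_three _ _ _
        _ ≤ L * (y - v) + L * (v - u) + L * (u - x) := by gcongr
        _ = L * (y - x) := by ring
    · exact gap x y hMx hxy hyN fun t ht htK => hne ⟨t, ⟨ht.1.le, ht.2.le⟩, htK⟩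
  refine ⟨⟨L, hL⟩, LipschitzOnWith.of_dist_le_mul fun x hx y hy => ?_⟩
  rw [Real.dist_eq, Real.dist_eq]
  change _ ≤ L * _
  rcases le_total x y with h | h
  · rw [abs_sub_comm, abs_sub_comm x, abs_of_nonneg (sub_nonneg.2 h)]
    exact lip x y hx.1 h hy.2
  · rw [abs_of_nonneg (sub_nonneg.2 h)]
    exact lip y x hy.1 h hx.2

/-- If `deriv ρ` (with its junk value `0` where `ρ` is not differentiable) satisfies the radial
equation, then `ρ` is in fact differentiable everywhere. -/
lemma hasDerivAt_of_hasDerivAt_deriv_radialForce (ha : ContDiff ℝ 1 a) (ha0 : ∀ t, a t ≠ 0)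
    (hb : 0 < b) (hρ : ∀ t, 0 < ρ t)
    (hg : ∀ t, HasDerivAt (deriv ρ) (radialForce b (a t ^ 2) (ρ t)) t) (t : ℝ) :
    HasDerivAt ρ (deriv ρ t) t := by
  have hgc : Continuous (deriv ρ) := continuous_iff_continuousAt.2 fun t => (hg t).continuousAt
  have hint : ρ = fun s => (∫ z in (0 : ℝ)..s, deriv ρ z) + ρ 0 := by
    funext s
    obtain ⟨L, hL⟩ := exists_lipschitzOnWith_of_radialForce ha ha0 hb hρ hg (min 0 s) (max 0 s)
    rw [(LipschitzOnWith.absolutelyContinuousOnInterval hL).integral_deriv_eq_sub]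
    ring
  have h := (intervalIntegral.integral_hasDerivAt_right (hgc.intervalIntegrable 0 t)
    (hgc.stronglyMeasurableAtFilter _ _) hgc.continuousAt).add_const (ρ 0)
  rwa [← hint] at h

end Regularity

section Energy

/-- The radial Hamiltonian `p² / 2 + a² / (2 r²) + b² r² / 8`, where `α = a²`. -/
noncomputable def radialEnergy (b α r p : ℝ) : ℝ :=
  p ^ 2 / 2 + α / (2 * r ^ 2) + b ^ 2 * r ^ 2 / 8

lemma hasDerivAt_radialEnergy {a r p : ℝ → ℝ} {b t a' : ℝ} (ha : HasDerivAt a a' t)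
    (hr0 : r t ≠ 0) (hr : HasDerivAt r (p t) t)
    (hp : HasDerivAt p (radialForce b (a t ^ 2) (r t)) t) :
    HasDerivAt (fun s => radialEnergy b (a s ^ 2) (r s) (p s)) (a t * a' / r t ^ 2) t := by
  have h := (((hp.pow 2).div_const 2).add ((ha.pow 2).div ((hr.pow 2).const_mul 2)
    (by simpa using! hr0))).add (((hr.pow 2).const_mul (b ^ 2)).div_const 8)
  unfold radialEnergy
  convert! h using 1
  unfold radialForce
  simp
  field_simp
  ring

lemma abs_deriv_radialEnergy_le {b r p a a' C : ℝ} (hC : |2 * a'| ≤ C * |a|) (hC0 : 0 ≤ C) :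
    |a * a' / r ^ 2| ≤ C * radialEnergy b (a ^ 2) r p := by
  have h1 : |a * a' / r ^ 2| = |2 * a'| * |a| / (2 * r ^ 2) := by
    rw [abs_div, abs_mul, abs_mul, abs_two, abs_of_nonneg (sq_nonneg r)]
    ring
  calc |a * a' / r ^ 2| = |2 * a'| * |a| / (2 * r ^ 2) := h1
    _ ≤ C * |a| * |a| / (2 * r ^ 2) := by gcongr
    _ = C * (a ^ 2 / (2 * r ^ 2)) := by rw [mul_assoc, abs_mul_abs_self]; ring
    _ ≤ C * radialEnergy b (a ^ 2) r p := by
        unfold radialEnergy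
        gcongr
        have : 0 ≤ p ^ 2 / 2 := by positivity
        have : 0 ≤ b ^ 2 * r ^ 2 / 8 := by positivity
        linarith

/-- `|H'| ≤ C H` implies `H τ ≤ exp (C |τ - t₀|) * H t₀`. -/
lemma le_exp_mul_of_abs_deriv_le {H H' : ℝ → ℝ} {C t₀ τ : ℝ}
    (hc : ContinuousOn H (uIcc t₀ τ)) (hd : ∀ t ∈ uIoo t₀ τ, HasDerivAt H (H' t) t)
    (hb : ∀ t ∈ uIoo t₀ τ, |H' t| ≤ C * H t) :
    H τ ≤ Real.exp (C * |τ - t₀|) * H t₀ := by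
  rcases le_total t₀ τ with h | h
  · rw [uIcc_of_le h] at hc
    rw [uIoo_of_le h] at hd hb
    have hanti : AntitoneOn (fun s => Real.exp (-C * s) * H s) (Icc t₀ τ) := by
      refine antitoneOn_of_hasDerivWithinAt_nonpos (convex_Icc _ _) (by fun_prop)
        (f' := fun s => Real.exp (-C * s) * (-C) * H s + Real.exp (-C * s) * H' s)
        (fun s hs => ?_) (fun s hs => ?_)
      · rw [interior_Icc] at hs
        have := (((hasDerivAt_id s).const_mul (-C)).exp.mul (hd s hs)).hasDerivWithinAt
          (s := interior (Icc t₀ τ))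
        simpa using! this
      · rw [interior_Icc] at hs
        have := (abs_le.1 (hb s hs)).2
        nlinarith [Real.exp_pos (-C * s)]
    have := hanti (left_mem_Icc.2 h) (right_mem_Icc.2 h) h
    simp only at this
    rw [abs_of_nonneg (sub_nonneg.2 h)]
    have e : Real.exp (C * (τ - t₀)) = Real.exp (C * τ) * Real.exp (-C * t₀) := by
      rw [← Real.exp_add]; ring_nf
    have e' : Real.exp (C * τ) * Real.exp (-C * τ) = 1 := by
      rw [← Real.exp_add]; simp
    calc H τ = Real.exp (C * τ) * (Real.exp (-C * τ) * H τ) := by rw [← mul_assoc, e', one_mul]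
      _ ≤ Real.exp (C * τ) * (Real.exp (-C * t₀) * H t₀) := by gcongr
      _ = _ := by rw [e, mul_assoc]
  · rw [uIcc_of_ge h] at hc
    rw [uIoo_of_ge h] at hd hb
    have hmono : MonotoneOn (fun s => Real.exp (C * s) * H s) (Icc τ t₀) := by
      refine monotoneOn_of_hasDerivWithinAt_nonneg (convex_Icc _ _) (by fun_prop)
        (f' := fun s => Real.exp (C * s) * C * H s + Real.exp (C * s) * H' s)
        (fun s hs => ?_) (fun s hs => ?_)
      · rw [interior_Icc] at hs
        have := (((hasDerivAt_id s).const_mul C).exp.mul (hd s hs)).hasDerivWithinAt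
          (s := interior (Icc τ t₀))
        simpa using! this
      · rw [interior_Icc] at hs
        have := (abs_le.1 (hb s hs)).1
        nlinarith [Real.exp_pos (C * s)]
    have := hmono (left_mem_Icc.2 h) (right_mem_Icc.2 h) h
    simp only at this
    rw [abs_of_nonpos (sub_nonpos.2 h)]
    have e : Real.exp (C * -(τ - t₀)) = Real.exp (-C * τ) * Real.exp (C * t₀) := by
      rw [← Real.exp_add]; ring_nf
    have e' : Real.exp (-C * τ) * Real.exp (C * τ) = 1 := by
      rw [← Real.exp_add]; simp
    calc H τ = Real.exp (-C * τ) * (Real.exp (C * τ) * H τ) := by rw [← mul_assoc, e', one_mul]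
      _ ≤ Real.exp (-C * τ) * (Real.exp (C * t₀) * H t₀) := by gcongr
      _ = _ := by rw [e, mul_assoc]

/-- Sublevel sets of the radial energy are bounded and bounded away from `r = 0`. -/
lemma exists_bounds_of_radialEnergy_le {b A E : ℝ} (hb : 0 < b) (hA : 0 < A) (hE : 0 ≤ E) :
    ∃ m M P : ℝ, 0 < m ∧ ∀ α r p : ℝ, A ^ 2 ≤ α → 0 < r → radialEnergy b α r p ≤ E →
      (m < r ∧ r < M) ∧ -P < p ∧ p < P := by
  refine ⟨A / (2 * E + 1), (8 * E + 1) / b, 2 * E + 1, by positivity, ?_⟩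
  intro α r p hα hr h
  unfold radialEnergy at h
  have hα0 : 0 ≤ α := (sq_nonneg A).trans hα
  have n1 : 0 ≤ p ^ 2 / 2 := by positivity
  have n2 : 0 ≤ α / (2 * r ^ 2) := by positivity
  have n3 : 0 ≤ b ^ 2 * r ^ 2 / 8 := by positivity
  have hp : |p| < 2 * E + 1 := abs_lt_of_sq_lt_sq (by nlinarith) (by positivity)
  refine ⟨⟨?_, ?_⟩, (abs_lt.1 hp).1, (abs_lt.1 hp).2⟩
  · rw [div_lt_iff₀ (by positivity)]
    have : α / (2 * r ^ 2) ≤ E := by linarith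
    rw [div_le_iff₀ (by positivity)] at this
    refine lt_of_pow_lt_pow_left₀ 2 (by positivity) ?_
    have hr2 : 0 < r ^ 2 := by positivity
    rw [mul_pow]
    nlinarith [mul_nonneg hE hE, mul_nonneg hE hr2.le, mul_nonneg (mul_nonneg hE hE) hr2.le]
  · rw [lt_div_iff₀ hb]
    refine lt_of_pow_lt_pow_left₀ 2 (by positivity) ?_
    nlinarith

end Energy

/-- A uniformly Lipschitz and bounded time-dependent vector field has solutions on the whole
time interval on which it is defined. -/
lemma exists_hasDerivAt_Ioo_of_lipschitzWith_of_norm_le {F : Type*} [NormedAddCommGroup F]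
    [NormedSpace ℝ F] [CompleteSpace F] {v : ℝ → F → F} {K L : NNReal} {t₀ T : ℝ} (hT : 0 < T)
    (hlip : ∀ t ∈ Icc (t₀ - T) (t₀ + T), LipschitzWith K (v t))
    (hcont : ∀ x, ContinuousOn (v · x) (Icc (t₀ - T) (t₀ + T)))
    (hL : ∀ t ∈ Icc (t₀ - T) (t₀ + T), ∀ x, ‖v t x‖ ≤ L) (x₀ : F) :
    ∃ f : ℝ → F, f t₀ = x₀ ∧ ∀ t ∈ Ioo (t₀ - T) (t₀ + T), HasDerivAt f (v t (f t)) t := by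
  have hpl : IsPicardLindelof v (tmin := t₀ - T) (tmax := t₀ + T)
      ⟨t₀, by constructor <;> linarith⟩ x₀ (L * T.toNNReal) 0 L K :=
    { lipschitzOnWith := fun t ht => (hlip t ht).lipschitzOnWith
      continuousOn := fun x _ => hcont x
      norm_le := fun t ht x _ => hL t ht x
      mul_max_le := by simp [hT.le] }
  obtain ⟨f, hf₀, hf⟩ := hpl.exists_eq_forall_mem_Icc_hasDerivWithinAt₀
  exact ⟨f, hf₀, fun t ht => (hf t (Ioo_subset_Icc_self ht)).hasDerivAt (Icc_mem_nhds ht.1 ht.2)⟩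

section Truncation

/-- The radial vector field on phase space, truncated outside of `[m, M] × [-P, P]`. -/
noncomputable def truncatedRadialField (b α m M P : ℝ) (x : ℝ × ℝ) : ℝ × ℝ :=
  (max (-P) (min P x.2), radialForce b α (max m (min M x.1)))

lemma truncatedRadialField_of_mem {b α m M P r p : ℝ} (hr : m ≤ r ∧ r ≤ M) (hp : -P ≤ p ∧ p ≤ P) :
    truncatedRadialField b α m M P (r, p) = (p, radialForce b α r) := by
  simp [truncatedRadialField, hr, hp]

lemma abs_radialForce_sub_le {b α m B x y : ℝ} (hm : 0 < m) (hα : |α| ≤ B) (hx : m ≤ x)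
    (hy : m ≤ y) :
    |radialForce b α x - radialForce b α y| ≤ (3 * B / m ^ 4 + b ^ 2 / 4) * |x - y| := by
  have hd : ∀ t ∈ Ici m, HasDerivWithinAt (radialForce b α) (α * -(3 / t ^ 4) - b ^ 2 / 4)
      (Ici m) t := by
    intro t ht
    have ht0 : t ≠ 0 := (hm.trans_le ht).ne'
    have h := ((hasDerivAt_const t α).div (hasDerivAt_pow 3 t) (pow_ne_zero 3 ht0)).sub
      ((hasDerivAt_id t).const_mul (b ^ 2 / 4))
    refine HasDerivAt.hasDerivWithinAt ?_
    unfold radialForce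
    convert! h using 1
    simp
    field_simp
  have := (convex_Ici m).norm_image_sub_le_of_norm_hasDerivWithin_le
    (C := 3 * B / m ^ 4 + b ^ 2 / 4) hd (fun t ht => ?_) hy hx
  · simpa only [Real.norm_eq_abs] using this
  · have ht : m ≤ t := ht
    have ht0 : 0 < t := hm.trans_le ht
    rw [Real.norm_eq_abs]
    calc |α * -(3 / t ^ 4) - b ^ 2 / 4| ≤ |α * -(3 / t ^ 4)| + |b ^ 2 / 4| := abs_sub _ _
      _ = |α| * 3 / t ^ 4 + b ^ 2 / 4 := by
          rw [abs_mul, abs_neg, abs_of_pos (by positivity : 0 < 3 / t ^ 4),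
            abs_of_nonneg (by positivity : 0 ≤ b ^ 2 / 4)]
          ring
      _ ≤ B * 3 / m ^ 4 + b ^ 2 / 4 := by
          have : 0 ≤ B := (abs_nonneg α).trans hα
          gcongr
      _ = _ := by ring

lemma exists_lipschitzWith_truncatedRadialField (b B M P : ℝ) {m : ℝ} (hm : 0 < m) :
    ∃ K, ∀ α, |α| ≤ B → LipschitzWith K (truncatedRadialField b α m M P) := by
  refine ⟨max 1 (3 * B / m ^ 4 + b ^ 2 / 4).toNNReal, fun α hα => ?_⟩
  have hB : 0 ≤ B := (abs_nonneg α).trans hα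
  refine LipschitzWith.prodMk ((LipschitzWith.prod_snd.const_min P).const_max (-P)) ?_
  refine LipschitzWith.of_dist_le_mul fun x y => ?_
  rw [Real.coe_toNNReal _ (by positivity), Real.dist_eq]
  refine (abs_radialForce_sub_le hm hα (le_max_left _ _) (le_max_left _ _)).trans ?_
  gcongr
  simpa [Real.dist_eq] using
    ((LipschitzWith.prod_fst.const_min M).const_max m).dist_le_mul x y

lemma exists_norm_truncatedRadialField_le (b B M P : ℝ) {m : ℝ} (hm : 0 < m) :
    ∃ L : NNReal, ∀ α, |α| ≤ B → ∀ x, ‖truncatedRadialField b α m M P x‖ ≤ L := by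
  refine ⟨(max |P| (B / m ^ 3 + b ^ 2 / 4 * max m |M|)).toNNReal, fun α hα x => ?_⟩
  refine le_trans ?_ (Real.le_coe_toNNReal _)
  rw [truncatedRadialField, Prod.norm_mk]
  refine max_le_max ?_ ?_
  · rw [Real.norm_eq_abs, abs_le]
    have h1 := neg_abs_le P
    have h2 := le_abs_self P
    have h3 := neg_le_abs P
    exact ⟨by have := le_max_left (-P) (min P x.2); linarith,
      max_le h3 ((min_le_left _ _).trans h2)⟩
  · set y := max m (min M x.1) with hy
    have hmy : m ≤ y := le_max_left _ _
    have hyM : y ≤ max m |M| := max_le_max le_rfl ((min_le_left _ _).trans (le_abs_self M))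
    have hy0 : 0 < y := hm.trans_le hmy
    rw [Real.norm_eq_abs, radialForce]
    calc |α / y ^ 3 - b ^ 2 / 4 * y| ≤ |α / y ^ 3| + |b ^ 2 / 4 * y| := abs_sub _ _
      _ = |α| / y ^ 3 + b ^ 2 / 4 * y := by
          rw [abs_div, abs_of_pos (by positivity : 0 < y ^ 3),
            abs_of_nonneg (by positivity : 0 ≤ b ^ 2 / 4 * y)]
      _ ≤ _ := by
          have : 0 ≤ B := (abs_nonneg α).trans hα
          gcongr

end Truncation

/-- `(r, p)` is a solution on `s`, with `r > 0`, of the radial equation in Hamiltonian form. -/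
structure IsRadialSolutionOn (a : ℝ → ℝ) (b : ℝ) (r p : ℝ → ℝ) (s : Set ℝ) : Prop where
  pos : ∀ t ∈ s, 0 < r t
  hasDerivAt_fst : ∀ t ∈ s, HasDerivAt r (p t) t
  hasDerivAt_snd : ∀ t ∈ s, HasDerivAt p (radialForce b (a t ^ 2) (r t)) t

section Solutions

variable {a : ℝ → ℝ} {b t₀ T : ℝ}

lemma IsRadialSolutionOn.mono {r p : ℝ → ℝ} {s s' : Set ℝ} (h : IsRadialSolutionOn a b r p s)
    (hs : s' ⊆ s) : IsRadialSolutionOn a b r p s' :=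
  ⟨fun t ht => h.pos t (hs ht), fun t ht => h.hasDerivAt_fst t (hs ht),
    fun t ht => h.hasDerivAt_snd t (hs ht)⟩

/-- A priori bounds for the radial equation: solutions with given initial data stay in a fixed
box on which the equation is regular. -/
lemma exists_bounds_radialSolution (ha : ContDiff ℝ 1 a) (ha0 : ∀ t, a t ≠ 0) (hb : 0 < b)
    (t₀ T r₀ r₁ : ℝ) :
    ∃ m M P : ℝ, 0 < m ∧ ∀ r p : ℝ → ℝ, ∀ τ, |τ - t₀| ≤ T → r t₀ = r₀ → p t₀ = r₁ →
      ContinuousOn r (uIcc t₀ τ) → ContinuousOn p (uIcc t₀ τ) → (∀ t ∈ uIcc t₀ τ, 0 < r t) →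
      IsRadialSolutionOn a b r p (uIoo t₀ τ) →
      (m < r τ ∧ r τ < M) ∧ -P < p τ ∧ p τ < P := by
  have hac : Continuous a := ha.continuous
  have hdc : Continuous (deriv a) := ha.continuous_deriv le_rfl
  have hq : Continuous fun t => 2 * deriv a t / a t := (hdc.const_mul 2).div hac ha0
  obtain ⟨C, hC⟩ := isCompact_Icc.exists_bound_of_continuousOn (s := Icc (t₀ - T) (t₀ + T))
    hq.continuousOn
  obtain ⟨D, hD⟩ := isCompact_Icc.exists_bound_of_continuousOn (s := Icc (t₀ - T) (t₀ + T))
    (hac.inv₀ ha0).continuousOn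
  set E := Real.exp (max C 0 * T) * radialEnergy b (a t₀ ^ 2) r₀ r₁ with hE
  have hH0 : 0 ≤ radialEnergy b (a t₀ ^ 2) r₀ r₁ := by
    unfold radialEnergy
    positivity
  obtain ⟨m, M, P, hm, hbox⟩ := exists_bounds_of_radialEnergy_le (b := b) (A := (max D 1)⁻¹)
    (E := E) hb (by positivity) (by positivity)
  refine ⟨m, M, P, hm, fun r p τ hτ hr₀ hr₁ hrc hpc hpos hsol => ?_⟩
  have hτ' := abs_le.1 hτ
  have hsub : uIcc t₀ τ ⊆ Icc (t₀ - T) (t₀ + T) :=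
    uIcc_subset_Icc ⟨by linarith [abs_nonneg (τ - t₀)], by linarith [abs_nonneg (τ - t₀)]⟩
      ⟨by linarith, by linarith⟩
  refine hbox (a τ ^ 2) (r τ) (p τ) ?_ (hpos τ right_mem_uIcc) ?_
  · have h1 := hD τ (hsub right_mem_uIcc)
    rw [Pi.inv_apply, norm_inv, Real.norm_eq_abs] at h1
    rw [← sq_abs (a τ)]
    gcongr
    exact inv_le_of_inv_le₀ (abs_pos.2 (ha0 τ)) (h1.trans (le_max_left _ _))
  · have hcont : ContinuousOn (fun t => radialEnergy b (a t ^ 2) (r t) (p t)) (uIcc t₀ τ) := by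
      have : ∀ t ∈ uIcc t₀ τ, 2 * r t ^ 2 ≠ 0 := fun t ht => by have := hpos t ht; positivity
      unfold radialEnergy
      fun_prop (disch := assumption)
    have := le_exp_mul_of_abs_deriv_le (C := max C 0) hcont
      (fun t ht => hasDerivAt_radialEnergy (ha.differentiable one_ne_zero t).hasDerivAt
        (hsol.pos t ht).ne' (hsol.hasDerivAt_fst t ht) (hsol.hasDerivAt_snd t ht))
      (fun t ht => abs_deriv_radialEnergy_le (by
        have h1 := hC t (hsub (uIoo_subset_uIcc_self ht))
        rw [norm_div, Real.norm_eq_abs, Real.norm_eq_abs, div_le_iff₀ (abs_pos.2 (ha0 t))] at h1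
        exact h1.trans (by gcongr; exact le_max_left _ _)) (le_max_right _ _))
    simp only [hr₀, hr₁] at this
    refine this.trans ?_
    rw [hE]
    gcongr

lemma IsRadialSolutionOn.eqOn (ha : ContDiff ℝ 1 a) (ha0 : ∀ t, a t ≠ 0) (hb : 0 < b)
    (hT : 0 < T) {r p ρ q : ℝ → ℝ}
    (h₁ : IsRadialSolutionOn a b r p (Ioo (t₀ - T) (t₀ + T)))
    (h₂ : IsRadialSolutionOn a b ρ q (Ioo (t₀ - T) (t₀ + T)))
    (hr : r t₀ = ρ t₀) (hp : p t₀ = q t₀) :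
    EqOn r ρ (Ioo (t₀ - T) (t₀ + T)) ∧ EqOn p q (Ioo (t₀ - T) (t₀ + T)) := by
  obtain ⟨m, M, P, hm, hbox⟩ := exists_bounds_radialSolution ha ha0 hb t₀ T (ρ t₀) (q t₀)
  obtain ⟨B, hB⟩ : ∃ B, ∀ t ∈ Icc (t₀ - T) (t₀ + T), |a t ^ 2| ≤ B :=
    isCompact_Icc.exists_bound_of_continuousOn (ha.continuous.pow 2).continuousOn
  obtain ⟨K, hK⟩ := exists_lipschitzWith_truncatedRadialField b B M P hm
  have ht₀ : t₀ ∈ Ioo (t₀ - T) (t₀ + T) := ⟨by linarith, by linarith⟩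
  have key : ∀ r p : ℝ → ℝ, r t₀ = ρ t₀ → p t₀ = q t₀ →
      IsRadialSolutionOn a b r p (Ioo (t₀ - T) (t₀ + T)) → ∀ t ∈ Ioo (t₀ - T) (t₀ + T),
      HasDerivAt (fun s => (r s, p s)) (truncatedRadialField b (a t ^ 2) m M P (r t, p t)) t ∧
        (r t, p t) ∈ (univ : Set (ℝ × ℝ)) := by
    intro r p hr hp h t ht
    have hsub : uIcc t₀ t ⊆ Ioo (t₀ - T) (t₀ + T) := ordConnected_Ioo.uIcc_subset ht₀ ht
    obtain ⟨h3, h4⟩ := hbox r p t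
      (abs_le.2 ⟨by linarith [ht.1], by linarith [ht.2]⟩) hr hp
      (fun s hs => (h.hasDerivAt_fst s (hsub hs)).continuousAt.continuousWithinAt)
      (fun s hs => (h.hasDerivAt_snd s (hsub hs)).continuousAt.continuousWithinAt)
      (fun s hs => h.pos s (hsub hs)) (h.mono (uIoo_subset_uIcc_self.trans hsub))
    rw [truncatedRadialField_of_mem ⟨h3.1.le, h3.2.le⟩ ⟨h4.1.le, h4.2.le⟩]
    exact ⟨(h.hasDerivAt_fst t ht).prodMk (h.hasDerivAt_snd t ht), mem_univ _⟩
  have := ODE_solution_unique_of_mem_Ioo (K := K) (s := fun _ => univ)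
    (v := fun t => truncatedRadialField b (a t ^ 2) m M P)
    (fun t ht => (hK _ (hB t (Ioo_subset_Icc_self ht))).lipschitzOnWith) ht₀
    (key r p hr hp h₁) (key ρ q rfl rfl h₂) (by simp [hr, hp])
  exact ⟨fun t ht => congrArg Prod.fst (this ht), fun t ht => congrArg Prod.snd (this ht)⟩

lemma exists_isRadialSolutionOn_Ioo (ha : ContDiff ℝ 1 a) (ha0 : ∀ t, a t ≠ 0) (hb : 0 < b)
    (hT : 0 < T) (t₀ : ℝ) {r₀ : ℝ} (hr₀ : 0 < r₀) (r₁ : ℝ) :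
    ∃ r p : ℝ → ℝ, r t₀ = r₀ ∧ p t₀ = r₁ ∧
      IsRadialSolutionOn a b r p (Ioo (t₀ - T) (t₀ + T)) := by
  obtain ⟨m, M, P, hm, hbox⟩ := exists_bounds_radialSolution ha ha0 hb t₀ T r₀ r₁
  obtain ⟨B, hB⟩ : ∃ B, ∀ t ∈ Icc (t₀ - T) (t₀ + T), |a t ^ 2| ≤ B :=
    isCompact_Icc.exists_bound_of_continuousOn (ha.continuous.pow 2).continuousOn
  obtain ⟨K, hK⟩ := exists_lipschitzWith_truncatedRadialField b B M P hm
  obtain ⟨L, hL⟩ := exists_norm_truncatedRadialField_le b B M P hm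
  obtain ⟨f, hf₀, hf⟩ := exists_hasDerivAt_Ioo_of_lipschitzWith_of_norm_le hT
    (v := fun t => truncatedRadialField b (a t ^ 2) m M P) (K := K) (L := L)
    (fun t ht => hK _ (hB t ht))
    (fun x => (continuous_const.prodMk
      (continuous_radialForce_left ha.continuous b (max m (min M x.1)))).continuousOn)
    (fun t ht => hL _ (hB t ht)) (r₀, r₁)
  have hfst : ∀ t ∈ Ioo (t₀ - T) (t₀ + T), HasDerivAt (fun s => (f s).1)
      (truncatedRadialField b (a t ^ 2) m M P (f t)).1 t := fun t ht =>
    (hf t ht).fst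
  have hsnd : ∀ t ∈ Ioo (t₀ - T) (t₀ + T), HasDerivAt (fun s => (f s).2)
      (truncatedRadialField b (a t ^ 2) m M P (f t)).2 t := fun t ht =>
    (hf t ht).snd
  have hfc : ContinuousOn f (Ioo (t₀ - T) (t₀ + T)) := fun t ht =>
    (hf t ht).continuousAt.continuousWithinAt
  set U : Set (ℝ × ℝ) := Ioo m M ×ˢ Ioo (-P) P with hU
  have hUo : IsOpen U := isOpen_Ioo.prod isOpen_Ioo
  have field : ∀ t, f t ∈ U → truncatedRadialField b (a t ^ 2) m M P (f t) =
      ((f t).2, radialForce b (a t ^ 2) (f t).1) := fun t ht =>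
    truncatedRadialField_of_mem ⟨ht.1.1.le, ht.1.2.le⟩ ⟨ht.2.1.le, ht.2.2.le⟩
  have hsolU : ∀ s ⊆ Ioo (t₀ - T) (t₀ + T), (∀ t ∈ s, f t ∈ U) →
      IsRadialSolutionOn a b (fun t => (f t).1) (fun t => (f t).2) s := fun s hs h =>
    ⟨fun t ht => hm.trans (h t ht).1.1,
      fun t ht => by simpa [field t (h t ht)] using hfst t (hs ht),
      fun t ht => by simpa [field t (h t ht)] using hsnd t (hs ht)⟩
  refine ⟨fun t => (f t).1, fun t => (f t).2, by simp [hf₀], by simp [hf₀],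
    hsolU _ Subset.rfl ?_⟩
  -- A time closest to `t₀` at which `f` is not in the open box `U` contradicts the a priori bounds.
  by_contra! hex
  obtain ⟨t₁, ht₁, ht₁U⟩ := hex
  have ht₁T : |t₁ - t₀| < T := abs_lt.2 ⟨by linarith [ht₁.1], by linarith [ht₁.2]⟩
  have hball : Metric.closedBall t₀ |t₁ - t₀| ⊆ Ioo (t₀ - T) (t₀ + T) := fun t ht => by
    rw [Metric.mem_closedBall, Real.dist_eq] at ht
    have := abs_lt.1 (ht.trans_lt ht₁T)
    exact ⟨by linarith [this.1], by linarith [this.2]⟩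
  have hcomp : IsCompact (Metric.closedBall t₀ |t₁ - t₀| ∩ f ⁻¹' Uᶜ) :=
    (isCompact_closedBall _ _).of_isClosed_subset
      ((hfc.mono hball).preimage_isClosed_of_isClosed Metric.isClosed_closedBall hUo.isClosed_compl)
      inter_subset_left
  obtain ⟨τ, ⟨hτb, hτU⟩, hτmin⟩ := hcomp.exists_isMinOn
    ⟨t₁, by simp [Real.dist_eq], ht₁U⟩ (f := fun t => |t - t₀|) (by fun_prop)
  have hτT := hball hτb
  have ht₀T : t₀ ∈ Ioo (t₀ - T) (t₀ + T) := ⟨by linarith, by linarith⟩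
  have hsub : uIcc t₀ τ ⊆ Ioo (t₀ - T) (t₀ + T) := ordConnected_Ioo.uIcc_subset ht₀T hτT
  have hin : ∀ t ∈ Metric.ball t₀ |τ - t₀|, f t ∈ U := by
    intro t ht
    by_contra htU
    rw [Metric.mem_ball, Real.dist_eq] at ht
    rw [Metric.mem_closedBall, Real.dist_eq] at hτb
    exact ht.not_ge (hτmin ⟨by simpa [Real.dist_eq] using ht.le.trans hτb, htU⟩)
  have huIoo : uIoo t₀ τ ⊆ Metric.ball t₀ |τ - t₀| := by
    intro t ht
    rw [Metric.mem_ball, Real.dist_eq]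
    rcases le_total t₀ τ with h | h
    · rw [uIoo_of_le h] at ht
      rw [abs_of_pos (by linarith [ht.1]), abs_of_nonneg (by linarith)]
      linarith [ht.2]
    · rw [uIoo_of_ge h] at ht
      rw [abs_of_neg (by linarith [ht.2]), abs_of_nonpos (by linarith)]
      linarith [ht.1]
  have hpos : ∀ t ∈ uIcc t₀ τ, 0 < (f t).1 := by
    intro t ht
    rcases eq_or_ne t₀ τ with rfl | hne
    · simp only [uIcc_self, mem_singleton_iff] at ht
      simp [ht, hf₀, hr₀]
    · have hcl : closure (Metric.ball t₀ |τ - t₀|) = Metric.closedBall t₀ |τ - t₀| :=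
        closure_ball _ (abs_pos.2 (sub_ne_zero.2 hne.symm)).ne'
      have htcl : t ∈ closure (Metric.ball t₀ |τ - t₀|) := by
        rw [hcl, Metric.mem_closedBall, Real.dist_eq]
        exact abs_sub_left_of_mem_uIcc ht
      have hft : f t ∈ closure U :=
        closure_mono (image_subset_iff.2 hin)
          ((hf t (hsub ht)).continuousAt.continuousWithinAt.mem_closure_image htcl)
      rw [hU, closure_prod_eq] at hft
      exact hm.trans_le (closure_minimal Ioo_subset_Icc_self isClosed_Icc hft.1).1
  have hτbox := hbox (fun t => (f t).1) (fun t => (f t).2) τ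
    (abs_le.2 ⟨by linarith [hτT.1], by linarith [hτT.2]⟩) (by simp [hf₀]) (by simp [hf₀])
    (continuous_fst.comp_continuousOn (hfc.mono hsub))
    (continuous_snd.comp_continuousOn (hfc.mono hsub)) hpos
    (hsolU _ (uIoo_subset_uIcc_self.trans hsub) fun t ht => hin t (huIoo ht))
  exact hτU ⟨hτbox.1, hτbox.2⟩

lemma exists_isRadialSolutionOn_univ (ha : ContDiff ℝ 1 a) (ha0 : ∀ t, a t ≠ 0) (hb : 0 < b)
    (t₀ : ℝ) {r₀ : ℝ} (hr₀ : 0 < r₀) (r₁ : ℝ) :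
    ∃ r p : ℝ → ℝ, r t₀ = r₀ ∧ p t₀ = r₁ ∧ IsRadialSolutionOn a b r p univ := by
  have hex : ∀ n : ℕ, ∃ r p : ℝ → ℝ, r t₀ = r₀ ∧ p t₀ = r₁ ∧
      IsRadialSolutionOn a b r p (Ioo (t₀ - (n + 1)) (t₀ + (n + 1))) := fun n =>
    exists_isRadialSolutionOn_Ioo ha ha0 hb (by positivity) t₀ hr₀ r₁
  choose r p hr hp hsol using hex
  have hmono : ∀ {k n : ℕ}, k ≤ n →
      Ioo (t₀ - (k + 1)) (t₀ + (k + 1)) ⊆ Ioo (t₀ - (n + 1)) (t₀ + (n + 1)) := by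
    intro k n hkn
    have : (k : ℝ) ≤ n := by exact_mod_cast hkn
    exact Ioo_subset_Ioo (by linarith) (by linarith)
  have hagree : ∀ k n : ℕ, k ≤ n → ∀ t ∈ Ioo (t₀ - (k + 1)) (t₀ + (k + 1)),
      r k t = r n t ∧ p k t = p n t := by
    intro k n hkn t ht
    have := (hsol k).eqOn ha ha0 hb (by positivity) ((hsol n).mono (hmono hkn))
      ((hr k).trans (hr n).symm) ((hp k).trans (hp n).symm)
    exact ⟨this.1 ht, this.2 ht⟩
  set N : ℝ → ℕ := fun t => ⌈|t - t₀|⌉₊ with hN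
  have hmem : ∀ t, t ∈ Ioo (t₀ - (N t + 1)) (t₀ + (N t + 1)) := by
    intro t
    have := abs_le.1 (Nat.le_ceil |t - t₀|)
    exact ⟨by linarith [this.1], by linarith [this.2]⟩
  have heq : ∀ n : ℕ, ∀ t ∈ Ioo (t₀ - (n + 1)) (t₀ + (n + 1)),
      r (N t) t = r n t ∧ p (N t) t = p n t := by
    intro n t ht
    rcases le_total (N t) n with h | h
    · exact hagree _ _ h t (hmem t)
    · have := hagree _ _ h t ht
      exact ⟨this.1.symm, this.2.symm⟩
  have hev : ∀ t, ∀ᶠ s in 𝓝 t, r (N s) s = r (N t) s ∧ p (N s) s = p (N t) s := fun t =>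
    (isOpen_Ioo.eventually_mem (hmem t)).mono fun s hs => heq (N t) s hs
  refine ⟨fun t => r (N t) t, fun t => p (N t) t, hr _, hp _, ⟨fun t _ => ?_, fun t _ => ?_,
    fun t _ => ?_⟩⟩
  · exact (hsol (N t)).pos t (hmem t)
  · exact ((hsol (N t)).hasDerivAt_fst t (hmem t)).congr_of_eventuallyEq
      ((hev t).mono fun s hs => hs.1)
  · exact ((hsol (N t)).hasDerivAt_snd t (hmem t)).congr_of_eventuallyEq
      ((hev t).mono fun s hs => hs.2)

end Solutions

/-- Global existence and uniqueness for the radial equation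
`r'' + (b²/4) r = a(t)²/r³`: if `a` is `C¹` on `ℝ` with no zeros, then for any
initial condition `r(t₀) = r₀ > 0`, `r'(t₀) = r₁` there is a unique solution
defined on the whole real line, and it stays positive. -/
theorem global_solution_radial_ode (a : ℝ → ℝ) (ha : ContDiff ℝ 1 a)
    (ha0 : ∀ t, a t ≠ 0) (b : ℝ) (hb : 0 < b)
    (t₀ r₀ r₁ : ℝ) (hr₀ : 0 < r₀) :
    ∃ r : ℝ → ℝ,
      ((∀ t, 0 < r t) ∧
        (∀ t, HasDerivAt (deriv r) ((a t) ^ 2 / (r t) ^ 3 - b ^ 2 / 4 * r t) t) ∧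
        r t₀ = r₀ ∧ deriv r t₀ = r₁) ∧
      ∀ ρ : ℝ → ℝ,
        ((∀ t, 0 < ρ t) ∧
          (∀ t, HasDerivAt (deriv ρ) ((a t) ^ 2 / (ρ t) ^ 3 - b ^ 2 / 4 * ρ t) t) ∧
          ρ t₀ = r₀ ∧ deriv ρ t₀ = r₁) → ρ = r := by
  obtain ⟨r, p, hr, hp, hsol⟩ := exists_isRadialSolutionOn_univ ha ha0 hb t₀ hr₀ r₁
  have hderiv : deriv r = p := funext fun t => (hsol.hasDerivAt_fst t (mem_univ t)).deriv
  refine ⟨r, ⟨fun t => hsol.pos t (mem_univ t), fun t => ?_, hr, by rw [hderiv, hp]⟩, ?_⟩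
  · rw [hderiv]
    exact hsol.hasDerivAt_snd t (mem_univ t)
  · rintro ρ ⟨hρ, hρ', hρ₀, hρ₁⟩
    have hsolρ : IsRadialSolutionOn a b ρ (deriv ρ) univ :=
      ⟨fun t _ => hρ t,
        fun t _ => hasDerivAt_of_hasDerivAt_deriv_radialForce ha ha0 hb hρ hρ' t,
        fun t _ => hρ' t⟩
    funext t
    refine ((hsolρ.mono (subset_univ _)).eqOn ha ha0 hb (t₀ := t₀) (T := |t - t₀| + 1)
      (by positivity) (hsol.mono (subset_univ _)) (hρ₀.trans hr.symm) (hρ₁.trans hp.symm)).1 ?_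
    have := abs_le.1 (le_refl |t - t₀|)
    exact ⟨by linarith [this.1], by linarith [this.2]⟩
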